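/- Let F > 0. Define the standard normal pdf φ(x) = exp(−x²/2)/√(2π) and cdf N(x) = ∫_{−∞}^x φ(u) du. For k ∈ ℝ and w > 0 set d₊(k,w) = −k/√w + √w/2, d₋(k,w) = −k/√w − √w/2, and C_BS(k,w) = F·(N(d₊(k,w)) − exp(k)·N(d₋(k,w))). Let w : ℝ → ℝ be twice differentiable with w(k) > 0 for all k, define g(k) := (1 − k·w′(k)/(2·w(k)))² − (w′(k)²/4)·(1/w(k) + 1/4) + w″(k)/2 and Ĉ(K) := C_BS(log(K/F), w(log(K/F))) for K > 0. Then Ĉ″(K) ≥ 0 for every K > 0 if and only if g(k) ≥ 0 for every k ∈ ℝ. -/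

import Mathlib

open MeasureTheory

/-- Standard normal pdf. -/
noncomputable def gauss (x : ℝ) : ℝ := Real.exp (-x ^ 2 / 2) / Real.sqrt (2 * Real.pi)

/-- Standard normal cdf. -/
noncomputable def normCdf (x : ℝ) : ℝ := ∫ u in Set.Iic x, gauss u

/-- Black–Scholes `d₊` in log-moneyness `k` and total variance `w`. -/
noncomputable def dplus (k w : ℝ) : ℝ := -k / Real.sqrt w + Real.sqrt w / 2

/-- Black–Scholes `d₋` in log-moneyness `k` and total variance `w`. -/
noncomputable def dminus (k w : ℝ) : ℝ := -k / Real.sqrt w - Real.sqrt w / 2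

/-- Undiscounted forward Black–Scholes call price. -/
noncomputable def CBS (F k w : ℝ) : ℝ :=
  F * (normCdf (dplus k w) - Real.exp k * normCdf (dminus k w))

theorem gauss_cont : Continuous gauss := by
  unfold gauss; fun_prop

theorem gauss_integrable : Integrable gauss := by
  have h := (integrable_exp_neg_mul_sq (b := 1/2) (by norm_num)).div_const (Real.sqrt (2 * Real.pi))
  refine h.congr (Filter.Eventually.of_forall fun x => ?_)
  simp only [gauss]
  congr 2; ring

theorem gauss_pos (x : ℝ) : 0 < gauss x := by
  unfold gauss; positivity

theorem normCdf_hasDerivAt (x : ℝ) : HasDerivAt normCdf (gauss x) x := by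
  have h1 : HasDerivAt (fun y => ∫ u in (0:ℝ)..y, gauss u) (gauss x) x :=
    intervalIntegral.integral_hasDerivAt_right (gauss_cont.intervalIntegrable _ _)
      (gauss_cont.stronglyMeasurableAtFilter _ _) gauss_cont.continuousAt
  have h2 : normCdf = fun y => (∫ u in (0:ℝ)..y, gauss u) + normCdf 0 := by
    funext y
    have := intervalIntegral.integral_Iic_sub_Iic (f := gauss) (μ := volume) (a := 0) (b := y)
      gauss_integrable.integrableOn gauss_integrable.integrableOn
    unfold normCdf
    linarith
  rw [h2]
  exact h1.add_const _

theorem gauss_hasDerivAt (x : ℝ) : HasDerivAt gauss (-x * gauss x) x := by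
  have h : HasDerivAt (fun x : ℝ => -x ^ 2 / 2) (-x) x := by
    have := ((hasDerivAt_pow 2 x).neg).div_const 2
    refine HasDerivAt.congr_deriv this ?_
    simp; ring
  have := (h.exp).div_const (Real.sqrt (2 * Real.pi))
  refine HasDerivAt.congr_deriv this ?_
  unfold gauss; ring

theorem gauss_dplus (k w : ℝ) (hw : 0 < w) :
    gauss (dplus k w) = Real.exp k * gauss (dminus k w) := by
  unfold gauss
  rw [← mul_div_assoc, ← Real.exp_add]
  congr 2
  unfold dplus dminus
  have : Real.sqrt w ≠ 0 := (Real.sqrt_pos.2 hw).ne'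
  field_simp
  ring

theorem dplus_hasDerivAt (w : ℝ → ℝ) (hw1 : Differentiable ℝ w) (hwpos : ∀ k, 0 < w k) (k : ℝ) :
    HasDerivAt (fun k => dplus k (w k))
      (-1 / √(w k) + k * (deriv w k / (2 * √(w k))) / (√(w k))^2
        + deriv w k / (2 * √(w k)) / 2) k := by
  have hs : √(w k) ≠ 0 := (Real.sqrt_pos.2 (hwpos k)).ne'
  have h := (hw1 k).hasDerivAt.sqrt (hwpos k).ne'
  have := ((hasDerivAt_id k).neg.div h hs).add (h.div_const 2)
  refine HasDerivAt.congr_deriv this ?_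
  simp; field_simp

theorem dminus_hasDerivAt (w : ℝ → ℝ) (hw1 : Differentiable ℝ w) (hwpos : ∀ k, 0 < w k) (k : ℝ) :
    HasDerivAt (fun k => dminus k (w k))
      (-1 / √(w k) + k * (deriv w k / (2 * √(w k))) / (√(w k))^2
        - deriv w k / (2 * √(w k)) / 2) k := by
  have hs : √(w k) ≠ 0 := (Real.sqrt_pos.2 (hwpos k)).ne'
  have h := (hw1 k).hasDerivAt.sqrt (hwpos k).ne'
  have := ((hasDerivAt_id k).neg.div h hs).sub (h.div_const 2)
  refine HasDerivAt.congr_deriv this ?_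
  simp; field_simp

theorem CBS_hasDerivAt (F : ℝ) (w : ℝ → ℝ) (hw1 : Differentiable ℝ w)
    (hwpos : ∀ k, 0 < w k) (k : ℝ) :
    HasDerivAt (fun k => CBS F k (w k))
      (F * Real.exp k * (gauss (dminus k (w k)) * (deriv w k / (2 * √(w k)))
        - normCdf (dminus k (w k)))) k := by
  have h1 := (normCdf_hasDerivAt _).comp k (dplus_hasDerivAt w hw1 hwpos k)
  have h2 := (normCdf_hasDerivAt _).comp k (dminus_hasDerivAt w hw1 hwpos k)
  have := (h1.sub ((Real.hasDerivAt_exp k).mul h2)).const_mul F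
  refine HasDerivAt.congr_deriv this ?_
  rw [gauss_dplus _ _ (hwpos k)]
  simp only [Function.comp]
  ring

theorem A_hasDerivAt (w : ℝ → ℝ) (hw1 : Differentiable ℝ w) (hw2 : Differentiable ℝ (deriv w))
    (hwpos : ∀ k, 0 < w k) (k : ℝ) :
    HasDerivAt (fun k => gauss (dminus k (w k)) * (deriv w k / (2 * √(w k)))
        - normCdf (dminus k (w k)))
      (gauss (dminus k (w k)) / √(w k) * ((1 - k * deriv w k / (2 * w k)) ^ 2
              - (deriv w k) ^ 2 / 4 * (1 / w k + 1 / 4)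
              + deriv (deriv w) k / 2)) k := by
  have hs : √(w k) ≠ 0 := (Real.sqrt_pos.2 (hwpos k)).ne'
  have h := (hw1 k).hasDerivAt.sqrt (hwpos k).ne'
  have hd := dminus_hasDerivAt w hw1 hwpos k
  have h2 := (normCdf_hasDerivAt _).comp k hd
  have h3 := (gauss_hasDerivAt _).comp k hd
  have h4 := (hw2 k).hasDerivAt.div (h.const_mul 2) (mul_ne_zero two_ne_zero hs)
  have := (h3.mul h4).sub h2
  refine HasDerivAt.congr_deriv this ?_
  simp only [Function.comp, Pi.div_apply]
  generalize gauss (dminus k (w k)) = G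
  unfold dminus
  have e : w k = √(w k) ^ 2 := (Real.sq_sqrt (hwpos k).le).symm
  generalize √(w k) = s at *
  rw [e]
  field_simp
  ring

theorem logF_hasDerivAt (F : ℝ) (hF : 0 < F) (K : ℝ) (hK : 0 < K) :
    HasDerivAt (fun K : ℝ => Real.log (K / F)) (1 / K) K := by
  have := ((hasDerivAt_id K).div_const F).log (div_pos hK hF).ne'
  refine HasDerivAt.congr_deriv this ?_
  simp only [id]; field_simp

/-- Butterfly-arbitrage criterion: `Ĉ″(K) ≥ 0` for all `K > 0` iff Durrleman's
function `g(k)` is nonnegative for all `k`. -/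
theorem butterfly_criterion (F : ℝ) (hF : 0 < F)
    (w : ℝ → ℝ) (hw1 : Differentiable ℝ w) (hw2 : Differentiable ℝ (deriv w))
    (hwpos : ∀ k, 0 < w k) :
    (∀ K : ℝ, 0 < K →
        0 ≤ deriv (deriv (fun K : ℝ => CBS F (Real.log (K / F)) (w (Real.log (K / F))))) K)
      ↔
    (∀ k : ℝ,
        0 ≤ (1 - k * deriv w k / (2 * w k)) ^ 2
              - (deriv w k) ^ 2 / 4 * (1 / w k + 1 / 4)
              + deriv (deriv w) k / 2) := by
  have hD1 : ∀ K : ℝ, 0 < K →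
      deriv (fun K : ℝ => CBS F (Real.log (K / F)) (w (Real.log (K / F)))) K =
      (fun k => gauss (dminus k (w k)) * (deriv w k / (2 * √(w k)))
        - normCdf (dminus k (w k))) (Real.log (K / F)) := by
    intro K hK
    have := (CBS_hasDerivAt F w hw1 hwpos (Real.log (K / F))).comp K (logF_hasDerivAt F hF K hK)
    refine this.deriv.trans ?_
    rw [Real.exp_log (div_pos hK hF)]
    field_simp
  have hD2 : ∀ K : ℝ, 0 < K → ∀ k, k = Real.log (K / F) →
      deriv (deriv (fun K : ℝ => CBS F (Real.log (K / F)) (w (Real.log (K / F))))) K =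
      (gauss (dminus k (w k)) / √(w k) * (1 / K)) * ((1 - k * deriv w k / (2 * w k)) ^ 2
              - (deriv w k) ^ 2 / 4 * (1 / w k + 1 / 4)
              + deriv (deriv w) k / 2) := by
    rintro K hK k rfl
    have h := (A_hasDerivAt w hw1 hw2 hwpos (Real.log (K / F))).comp K (logF_hasDerivAt F hF K hK)
    have he := h.congr_of_eventuallyEq
      (f₁ := deriv (fun K : ℝ => CBS F (Real.log (K / F)) (w (Real.log (K / F))))) (by
        filter_upwards [lt_mem_nhds hK] with y hy using hD1 y hy)
    rw [he.deriv]
    ring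
  have hpos : ∀ K : ℝ, 0 < K → ∀ k, 0 < gauss (dminus k (w k)) / √(w k) * (1 / K) := by
    intro K hK k
    have := gauss_pos (dminus k (w k))
    have := Real.sqrt_pos.2 (hwpos k)
    positivity
  constructor
  · intro H k
    have hK : 0 < F * Real.exp k := by positivity
    have h := H _ hK
    rw [hD2 _ hK k (by rw [mul_div_cancel_left₀ _ hF.ne', Real.log_exp])] at h
    exact nonneg_of_mul_nonneg_right h (hpos _ hK k)
  · intro H K hK
    rw [hD2 K hK _ rfl]
    exact mul_nonneg (hpos K hK _).le (H _)
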